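/- The PZ81 correlation energy per particle ε_c(r_s) = γ/(1 + β₁√r_s + β₂ r_s) for r_s > 1 and ε_c(r_s) = A log r_s + B + C r_s log r_s + D r_s for r_s ≤ 1 (with γ, B, D < 0, β₁, β₂ > 0, and the matching conditions γ/(1+β₁+β₂) = B + D and γ/(1+β₁+β₂) + (γ/3)(β₁/2 + β₂)/(1+β₁+β₂)² = B + D − (1/3)(D + A + C)) yields e_c(ρ) = ρ ε_c(r_s(ρ)), r_s = (3/(4πρ))^{1/3}, which satisfies: (i) e_c and v_c = de_c/dρ are continuous on [0,∞) with e_c(0) = v_c(0) = 0; (ii) |v_c(ρ)| ≤ C(1 + ρ^{1/3}) for all ρ ≥ 0, i.e., assumption |v_xc| ≤ c(1+ρ^{p−1}) holds with p = 4/3; (iii) limsup_{ρ→0+} e_c(ρ)/ρ^{4/3} = (4π/3)^{1/3}·γ/β₂ < 0. -/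

import Mathlib

open MeasureTheory Real Filter Set
noncomputable section

/-- Wigner-Seitz radius `r_s = (3/(4πρ))^{1/3}`. -/
def rs (t : ℝ) : ℝ := (3 / (4 * π * t)) ^ ((1:ℝ)/3)

theorem rs_pos {t : ℝ} (ht : 0 < t) : 0 < rs t := by
  unfold rs; positivity

theorem rs_inv {t : ℝ} (ht : 0 < t) :
    1 / rs t = (4 * π / 3) ^ ((1:ℝ)/3) * t ^ ((1:ℝ)/3) := by
  unfold rs
  rw [← Real.mul_rpow (by positivity) ht.le, one_div, ← Real.inv_rpow (by positivity)]
  congr 1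
  have := Real.pi_pos
  field_simp

theorem rs_hasDerivAt {t : ℝ} (ht : 0 < t) : HasDerivAt rs (-(1/3) * (rs t / t)) t := by
  have hpi := Real.pi_pos
  have hK : 0 < (4 * π / 3) ^ ((1:ℝ)/3) := by positivity
  have h1 : HasDerivAt (fun s : ℝ => ((4 * π / 3) ^ ((1:ℝ)/3))⁻¹ * s ^ (-(1:ℝ)/3))
      (((4 * π / 3) ^ ((1:ℝ)/3))⁻¹ * ((-(1:ℝ)/3) * t ^ (-(1:ℝ)/3 - 1))) t :=
    (Real.hasDerivAt_rpow_const (Or.inl ht.ne')).const_mul _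
  have key : ∀ s : ℝ, 0 < s → rs s = ((4 * π / 3) ^ ((1:ℝ)/3))⁻¹ * s ^ (-(1:ℝ)/3) := by
    intro s hs
    have h := rs_inv hs
    have h2 : rs s = (1 / rs s)⁻¹ := by simp
    rw [h2, h, mul_inv, ← Real.rpow_neg hs.le]
    norm_num
  have h2 : HasDerivAt rs
      (((4 * π / 3) ^ ((1:ℝ)/3))⁻¹ * ((-(1:ℝ)/3) * t ^ (-(1:ℝ)/3 - 1))) t := by
    apply h1.congr_of_eventuallyEq
    filter_upwards [lt_mem_nhds ht] with s hs using key s hs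
  convert h2 using 1
  rw [key t ht, Real.rpow_sub_one ht.ne']
  ring

theorem rs_tendsto : Tendsto rs (nhdsWithin 0 (Set.Ioi 0)) atTop := by
  have hpi := Real.pi_pos
  have h1 : Tendsto (fun t : ℝ => 3 / (4 * π) * t⁻¹) (nhdsWithin 0 (Set.Ioi 0)) atTop :=
    Tendsto.const_mul_atTop (by positivity) tendsto_inv_nhdsGT_zero
  have h2 := (tendsto_rpow_atTop (y := (1:ℝ)/3) (by norm_num)).comp h1
  refine h2.congr ?_
  intro t
  simp only [Function.comp, rs]
  congr 1
  rw [← div_eq_mul_inv, div_div]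

def pzE (gam Ac Bc Cc Dc b1 b2 : ℝ) (r : ℝ) : ℝ :=
  if 1 < r then gam / (1 + b1 * Real.sqrt r + b2 * r)
      else Ac * Real.log r + Bc + Cc * r * Real.log r + Dc * r

def pzD (gam Ac Cc Dc b1 b2 : ℝ) (r : ℝ) : ℝ :=
  if 1 < r then -(gam * (b1 / (2 * Real.sqrt r) + b2)) / (1 + b1 * Real.sqrt r + b2 * r) ^ 2
      else Ac / r + Cc * Real.log r + Cc + Dc

theorem pzE1_deriv (gam b1 b2 r : ℝ) (hb1 : 0 < b1) (hb2 : 0 < b2) (hr : 0 < r) :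
    HasDerivAt (fun r => gam / (1 + b1 * Real.sqrt r + b2 * r))
      (-(gam * (b1 / (2 * Real.sqrt r) + b2)) / (1 + b1 * Real.sqrt r + b2 * r) ^ 2) r := by
  have hS : (1 + b1 * Real.sqrt r + b2 * r) ≠ 0 := by positivity
  have h1 := (((Real.hasDerivAt_sqrt hr.ne').const_mul b1).const_add 1).add
    ((hasDerivAt_id r).const_mul b2)
  have h2 := (hasDerivAt_const r gam).div h1 hS
  refine h2.congr_deriv ?_
  simp only [Pi.add_apply, id]
  ring

theorem pzE2_deriv (Ac Bc Cc Dc r : ℝ) (hr : 0 < r) :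
    HasDerivAt (fun r => Ac * Real.log r + Bc + Cc * r * Real.log r + Dc * r)
      (Ac / r + Cc * Real.log r + Cc + Dc) r := by
  have hl := Real.hasDerivAt_log hr.ne'
  have h1 := (((hl.const_mul Ac).add_const Bc).add
    (((hasDerivAt_id r).const_mul Cc).mul hl)).add ((hasDerivAt_id r).const_mul Dc)
  refine h1.congr_deriv ?_
  simp only [id]
  field_simp
  ring

theorem pzE_deriv (gam Ac Bc Cc Dc b1 b2 : ℝ)
    (hb1 : 0 < b1) (hb2 : 0 < b2) (hm1 : gam / (1 + b1 + b2) = Bc + Dc) (hm2 : -(gam * (b1 / 2 + b2)) / (1 + b1 + b2) ^ 2 = Ac + Cc + Dc) (r : ℝ) (hr : 0 < r) :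
    HasDerivAt (pzE gam Ac Bc Cc Dc b1 b2) (pzD gam Ac Cc Dc b1 b2 r) r := by
  have d1 := pzE1_deriv gam b1 b2 r hb1 hb2 hr
  have d2 := pzE2_deriv Ac Bc Cc Dc r hr
  rcases lt_trichotomy r 1 with h | h | h
  · have : pzD gam Ac Cc Dc b1 b2 r = Ac / r + Cc * Real.log r + Cc + Dc := by
      simp [pzD, not_lt.2 h.le]
    rw [this]
    apply d2.congr_of_eventuallyEq
    filter_upwards [gt_mem_nhds h] with s hs
    simp [pzE, not_lt.2 (le_of_lt hs)]
  · subst h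
    have e : pzD gam Ac Cc Dc b1 b2 1 = Ac + Cc + Dc := by simp [pzD]
    have h1 : HasDerivWithinAt (pzE gam Ac Bc Cc Dc b1 b2) (Ac + Cc + Dc) (Set.Ici 1) 1 := by
      have : HasDerivWithinAt (fun r => gam / (1 + b1 * Real.sqrt r + b2 * r))
        (Ac + Cc + Dc) (Set.Ici 1) 1 := by
        refine d1.hasDerivWithinAt.congr_deriv ?_
        simpa using hm2
      have hv : pzE gam Ac Bc Cc Dc b1 b2 1 = gam / (1 + b1 * Real.sqrt 1 + b2 * 1) := by
        simp [pzE, hm1]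
      refine this.congr ?_ hv
      intro s hs
      rcases (Set.mem_Ici.1 hs).eq_or_lt with h | h
      · subst h; exact hv
      · simp [pzE, h]
    have h2 : HasDerivWithinAt (pzE gam Ac Bc Cc Dc b1 b2) (Ac + Cc + Dc) (Set.Iic 1) 1 := by
      have : HasDerivWithinAt (fun r => Ac * Real.log r + Bc + Cc * r * Real.log r + Dc * r)
        (Ac + Cc + Dc) (Set.Iic 1) 1 := by
        refine d2.hasDerivWithinAt.congr_deriv ?_
        simp
      refine this.congr ?_ ?_
      · intro s hs
        simp [pzE, not_lt.2 (Set.mem_Iic.1 hs)]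
      · simp [pzE]
    rw [e]
    have := h2.union h1
    rwa [Set.Iic_union_Ici, hasDerivWithinAt_univ] at this
  · have : pzD gam Ac Cc Dc b1 b2 r =
      -(gam * (b1 / (2 * Real.sqrt r) + b2)) / (1 + b1 * Real.sqrt r + b2 * r) ^ 2 := by
      simp [pzD, h]
    rw [this]
    apply d1.congr_of_eventuallyEq
    filter_upwards [lt_mem_nhds h] with s hs
    simp [pzE, hs]

theorem pzD_cont (gam Ac Cc Dc b1 b2 : ℝ)
    (hb1 : 0 < b1) (hb2 : 0 < b2) (hm2 : -(gam * (b1 / 2 + b2)) / (1 + b1 + b2) ^ 2 = Ac + Cc + Dc) : ContinuousOn (pzD gam Ac Cc Dc b1 b2) (Set.Ioi 0) := by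
  have c1 : ContinuousOn (fun r : ℝ =>
      -(gam * (b1 / (2 * Real.sqrt r) + b2)) / (1 + b1 * Real.sqrt r + b2 * r) ^ 2)
      (Set.Ioi 0) := by
    intro r hr
    have hr : 0 < r := hr
    have h1 : (2 * Real.sqrt r) ≠ 0 := by positivity
    have h2 : (1 + b1 * Real.sqrt r + b2 * r) ^ 2 ≠ 0 := by positivity
    apply ContinuousAt.continuousWithinAt
    fun_prop (disch := assumption)
  have c2 : ContinuousOn (fun r : ℝ => Ac / r + Cc * Real.log r + Cc + Dc) (Set.Ioi 0) := by
    intro r hr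
    have hr : r ≠ 0 := ne_of_gt hr
    apply ContinuousAt.continuousWithinAt
    fun_prop (disch := assumption)
  unfold pzD
  refine ContinuousOn.if ?_ (c1.mono Set.inter_subset_left) (c2.mono Set.inter_subset_left)
  rintro r ⟨_, hr⟩
  have : r = 1 := by
    have : r ∈ frontier (Set.Ioi (1:ℝ)) := hr
    simpa [frontier_Ioi] using this
  subst this
  simpa using hm2

theorem pz_bound (gam Ac Bc Cc Dc b1 b2 : ℝ)
    (hb1 : 0 < b1) (hb2 : 0 < b2) (r : ℝ) (hr : 0 < r) :
    |pzE gam Ac Bc Cc Dc b1 b2 r - r / 3 * pzD gam Ac Cc Dc b1 b2 r|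
      ≤ 2 * (|gam| + |Ac| + |Bc| + |Cc| + |Dc|) * (1 + 1 / r) := by
  have hA := abs_nonneg Ac
  have hB := abs_nonneg Bc
  have hC := abs_nonneg Cc
  have hD := abs_nonneg Dc
  have hg := abs_nonneg gam
  have hri : 0 < 1 / r := by positivity
  by_cases h : 1 < r
  · simp only [pzE, pzD, if_pos h]
    obtain ⟨s, hs, rfl⟩ : ∃ s : ℝ, 0 < s ∧ r = s ^ 2 :=
      ⟨√r, by positivity, (Real.sq_sqrt hr.le).symm⟩
    rw [Real.sqrt_sq hs.le]
    have hS1 : 1 ≤ 1 + b1 * s + b2 * s ^ 2 := by nlinarith [mul_pos hb1 hs, mul_pos hb2 hr]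
    set S := 1 + b1 * s + b2 * s ^ 2 with hS
    have hS0 : 0 < S := by linarith
    have e : gam / S - s ^ 2 / 3 * (-(gam * (b1 / (2 * s) + b2)) / S ^ 2)
        = gam * ((S + (b1 * s / 2 + b2 * s ^ 2) / 3) / S ^ 2) := by
      field_simp
      ring
    have q0 : 0 ≤ (S + (b1 * s / 2 + b2 * s ^ 2) / 3) / S ^ 2 := by positivity
    have q2 : (S + (b1 * s / 2 + b2 * s ^ 2) / 3) / S ^ 2 ≤ 2 := by
      rw [div_le_iff₀ (by positivity)]
      have := mul_pos hb1 hs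
      nlinarith
    rw [e, abs_mul, abs_of_nonneg q0]
    calc _ ≤ |gam| * 2 := by gcongr
      _ ≤ 2 * (|gam| + |Ac| + |Bc| + |Cc| + |Dc|) * 1 := by linarith
      _ ≤ _ := by
        gcongr
        linarith
  · simp only [pzE, pzD, if_neg h]
    push Not at h
    have l0 : Real.log r ≤ 0 := Real.log_nonpos hr.le h
    have l1 : |Real.log r| ≤ 1 / r := by
      rw [abs_of_nonpos l0]
      have := Real.one_sub_inv_le_log_of_pos hr
      rw [one_div]; linarith
    have l2 : |r * Real.log r| ≤ 1 := by
      rw [abs_mul, abs_of_pos hr]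
      calc r * |Real.log r| ≤ r * (1 / r) := by gcongr
        _ = 1 := by field_simp
    have hr1 : |r| ≤ 1 := by rwa [abs_of_pos hr]
    have e : Ac * Real.log r + Bc + Cc * r * Real.log r + Dc * r -
        r / 3 * (Ac / r + Cc * Real.log r + Cc + Dc)
        = Ac * Real.log r + Bc + Cc * (r * Real.log r) * (2/3) + Dc * r * (2/3)
          - Ac / 3 - Cc * r / 3 := by
      field_simp
      ring
    rw [e]
    have a1 : |Ac * Real.log r| ≤ |Ac| * (1 / r) := by rw [abs_mul]; gcongr
    have a2 : |Cc * (r * Real.log r)| ≤ |Cc| * 1 := by rw [abs_mul]; gcongr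
    have a3 : |Dc * r| ≤ |Dc| * 1 := by rw [abs_mul]; gcongr
    have a4 : |Cc * r| ≤ |Cc| * 1 := by rw [abs_mul]; gcongr
    have p1 := mul_nonneg hA hri.le
    have p2 := mul_nonneg hB hri.le
    have p3 := mul_nonneg hC hri.le
    have p4 := mul_nonneg hD hri.le
    have p5 := mul_nonneg hg hri.le
    have x1 := abs_le.1 a1
    have x2 := abs_le.1 a2
    have x3 := abs_le.1 a3
    have x4 := abs_le.1 a4
    have x5 := abs_le.1 (le_refl |Ac|)
    have x6 := abs_le.1 (le_refl |Bc|)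
    rw [abs_le]
    constructor <;> nlinarith

theorem pz_S_tendsto (b1 b2 : ℝ)
    (hb1 : 0 < b1) (hb2 : 0 < b2) : Tendsto (fun r : ℝ => 1 + b1 * Real.sqrt r + b2 * r) atTop atTop := by
  apply tendsto_atTop_mono' atTop _ (tendsto_id.const_mul_atTop hb2)
  filter_upwards with r
  have : 0 ≤ b1 * Real.sqrt r := by positivity
  simp only [id]
  linarith

theorem pzE_tendsto (gam Ac Bc Cc Dc b1 b2 : ℝ)
    (hb1 : 0 < b1) (hb2 : 0 < b2) : Tendsto (pzE gam Ac Bc Cc Dc b1 b2) atTop (nhds 0) := by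
  refine ((pz_S_tendsto b1 b2 hb1 hb2).const_div_atTop gam).congr' ?_
  filter_upwards [eventually_gt_atTop 1] with r hr
  simp [pzE, hr]

theorem pzD_tendsto (gam Ac Cc Dc b1 b2 : ℝ)
    (hb1 : 0 < b1) (hb2 : 0 < b2) : Tendsto (fun r => r / 3 * pzD gam Ac Cc Dc b1 b2 r) atTop (nhds 0) := by
  have h := ((pz_S_tendsto b1 b2 hb1 hb2).const_div_atTop |gam|)
  refine squeeze_zero_norm' ?_ h
  filter_upwards [eventually_gt_atTop 1] with r hr
  have hr0 : 0 < r := by linarith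
  simp only [pzD, if_pos hr, Real.norm_eq_abs]
  obtain ⟨s, hs, rfl⟩ : ∃ s : ℝ, 0 < s ∧ r = s ^ 2 :=
    ⟨√r, by positivity, (Real.sq_sqrt hr0.le).symm⟩
  rw [Real.sqrt_sq hs.le]
  have h1 := mul_pos hb1 hs
  have h2 := mul_pos hb2 hr0
  set S := 1 + b1 * s + b2 * s ^ 2 with hS
  have hS0 : 0 < S := by linarith
  have e : s ^ 2 / 3 * (-(gam * (b1 / (2 * s) + b2)) / S ^ 2)
      = - (gam * (((b1 * s / 2 + b2 * s ^ 2) / 3) / S ^ 2)) := by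
    field_simp
  have q0 : 0 ≤ (((b1 * s / 2 + b2 * s ^ 2) / 3) / S ^ 2) := by positivity
  have q2 : (((b1 * s / 2 + b2 * s ^ 2) / 3) / S ^ 2) ≤ 1 / S := by
    rw [div_le_div_iff₀ (by positivity) hS0]
    nlinarith
  rw [e, abs_neg, abs_mul, abs_of_nonneg q0, div_eq_mul_one_div |gam| S]
  exact mul_le_mul_of_nonneg_left q2 (abs_nonneg gam)

theorem pz_rE_tendsto (gam Ac Bc Cc Dc b1 b2 : ℝ)
    (hb1 : 0 < b1) (hb2 : 0 < b2) :
    Tendsto (fun r => r * pzE gam Ac Bc Cc Dc b1 b2 r) atTop (nhds (gam / b2)) := by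
  have h1 : Tendsto (fun r : ℝ => r⁻¹ + b1 * (Real.sqrt r)⁻¹ + b2) atTop
      (nhds (0 + b1 * 0 + b2)) :=
    (tendsto_inv_atTop_zero.add
      ((tendsto_inv_atTop_zero.comp Real.tendsto_sqrt_atTop).const_mul b1)).add_const b2
  have h2 := (tendsto_const_nhds (x := gam)).div h1 (by simpa using hb2.ne')
  simp only [mul_zero, zero_add] at h2
  refine h2.congr' ?_
  filter_upwards [eventually_gt_atTop 1] with r hr
  have hr0 : 0 < r := by linarith
  simp only [pzE, if_pos hr, Pi.div_apply]
  obtain ⟨s, hs, rfl⟩ : ∃ s : ℝ, 0 < s ∧ r = s ^ 2 :=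
    ⟨√r, by positivity, (Real.sq_sqrt hr0.le).symm⟩
  rw [Real.sqrt_sq hs.le]
  have : (s ^ 2)⁻¹ + b1 * s⁻¹ + b2 = (1 + b1 * s + b2 * s ^ 2) / s ^ 2 := by
    field_simp
  rw [this]
  field_simp

/-- the PZ81 correlation energy per particle
`ε_c(r_s) = γ/(1+β₁√r_s+β₂r_s)` for `r_s > 1` and
`ε_c(r_s) = A log r_s + B + C r_s log r_s + D r_s` for `r_s ≤ 1`
(with `γ, B, D < 0`, `β₁, β₂ > 0` and the stated matching conditions) yields
`e_c(ρ) = ρ ε_c(r_s(ρ))` which satisfies: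
(i) `e_c` and `v_c = de_c/dρ` are continuous on `[0,∞)` with `e_c(0) = v_c(0) = 0`;
(ii) `|v_c(ρ)| ≤ C(1+ρ^{1/3})`, i.e. the growth assumption holds with `p = 4/3`;
(iii) `limsup_{ρ→0+} e_c(ρ)/ρ^{4/3} = (4π/3)^{1/3} γ/β₂ < 0`. -/
theorem pz81_satisfies_assumptions
    (gam Ac Bc Cc Dc b1 b2 : ℝ)
    (hgam : gam < 0) (hBc : Bc < 0) (hDc : Dc < 0)
    (hb1 : 0 < b1) (hb2 : 0 < b2)
    -- matching conditions (continuity of ε_c and of v_c at r_s = 1)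
    (hmatch1 : gam / (1 + b1 + b2) = Bc + Dc)
    (hmatch2 : gam / (1 + b1 + b2)
        + (gam / 3) * (b1 / 2 + b2) / (1 + b1 + b2) ^ 2
      = Bc + Dc - (1/3) * (Dc + Ac + Cc))
    (epsc ec : ℝ → ℝ)
    (heps : epsc = fun r => if 1 < r then gam / (1 + b1 * Real.sqrt r + b2 * r)
      else Ac * Real.log r + Bc + Cc * r * Real.log r + Dc * r)
    (hec : ec = fun t => if t ≤ 0 then 0 else t * epsc (rs t)) :
    -- (i)
    (ec 0 = 0 ∧ ContinuousOn ec (Set.Ici 0) ∧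
      ∃ vc : ℝ → ℝ, vc 0 = 0 ∧ ContinuousOn vc (Set.Ici 0) ∧
        (∀ t ∈ Set.Ici (0:ℝ), HasDerivWithinAt ec (vc t) (Set.Ici 0) t) ∧
        -- (ii) the growth bound with p = 4/3
        (∃ C : ℝ, 0 < C ∧ ∀ t ≥ (0:ℝ), |vc t| ≤ C * (1 + t ^ ((1:ℝ)/3)))) ∧
    -- (iii)
    (Filter.limsup (fun t => ((ec t / t ^ ((4:ℝ)/3) : ℝ) : EReal))
        (nhdsWithin 0 (Set.Ioi 0))
      = (((4 * π / 3) ^ ((1:ℝ)/3) * gam / b2 : ℝ) : EReal) ∧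
      (4 * π / 3) ^ ((1:ℝ)/3) * gam / b2 < 0) := by
  have hm2 : -(gam * (b1 / 2 + b2)) / (1 + b1 + b2) ^ 2 = Ac + Cc + Dc := by
    have : -(gam * (b1 / 2 + b2)) / (1 + b1 + b2) ^ 2
      = -3 * ((gam / 3) * (b1 / 2 + b2) / (1 + b1 + b2) ^ 2) := by ring
    rw [this]
    linarith
  have heps' : epsc = pzE gam Ac Bc Cc Dc b1 b2 := by
    rw [heps]; rfl
  subst heps'
  clear heps
  have ec0 : ec 0 = 0 := by simp [hec]
  have ecpos : ∀ t, 0 < t → ec t = t * pzE gam Ac Bc Cc Dc b1 b2 (rs t) := by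
    intro t ht
    simp [hec, not_le.2 ht]
  have hdE := pzE_deriv gam Ac Bc Cc Dc b1 b2 hb1 hb2 hmatch1 hm2
  set E := pzE gam Ac Bc Cc Dc b1 b2 with hE
  set D := pzD gam Ac Cc Dc b1 b2 with hD
  let vc : ℝ → ℝ := fun t => if t ≤ 0 then 0 else E (rs t) - rs t / 3 * D (rs t)
  have vc0 : vc 0 = 0 := by simp [vc]
  have vcpos : ∀ t, 0 < t → vc t = E (rs t) - rs t / 3 * D (rs t) := by
    intro t ht
    simp [vc, not_le.2 ht]
  have hder : ∀ t ∈ Set.Ici (0:ℝ), HasDerivWithinAt ec (vc t) (Set.Ici 0) t := by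
    intro t ht
    rcases (Set.mem_Ici.1 ht).eq_or_lt with h | h
    · subst h
      rw [vc0, hasDerivWithinAt_iff_tendsto_slope]
      have : Set.Ici (0:ℝ) \ {0} = Set.Ioi 0 := by simp
      rw [this]
      refine ((pzE_tendsto gam Ac Bc Cc Dc b1 b2 hb1 hb2).comp rs_tendsto).congr' ?_
      filter_upwards [self_mem_nhdsWithin] with s hs
      have hs : 0 < s := hs
      rw [slope_def_field, ec0, ecpos s hs]
      simp only [Function.comp, sub_zero]
      field_simp
      rfl
    · apply HasDerivAt.hasDerivWithinAt
      have h1 := (hasDerivAt_id t).mul ((hdE (rs t) (rs_pos h)).comp t (rs_hasDerivAt h))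
      have h2 := h1.congr_of_eventuallyEq (f₁ := ec) (by
        filter_upwards [lt_mem_nhds h] with s hs
        rw [ecpos s hs]; rfl)
      refine h2.congr_deriv ?_
      rw [vcpos t h]
      simp only [id, Function.comp]
      field_simp
      ring
  have hlim3 : Tendsto (fun t => ec t / t ^ ((4:ℝ)/3)) (nhdsWithin 0 (Set.Ioi 0))
      (nhds ((4 * π / 3) ^ ((1:ℝ)/3) * gam / b2)) := by
    have h := ((pz_rE_tendsto gam Ac Bc Cc Dc b1 b2 hb1 hb2).comp rs_tendsto).const_mul
      ((4 * π / 3) ^ ((1:ℝ)/3))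
    rw [← mul_div_assoc] at h
    refine h.congr' ?_
    filter_upwards [self_mem_nhdsWithin] with s hs
    have hs : 0 < s := hs
    have hr := rs_pos hs
    have hi := rs_inv hs
    have hp : 0 < s ^ ((1:ℝ)/3) := by positivity
    have e : s ^ ((4:ℝ)/3) = s * s ^ ((1:ℝ)/3) := by
      rw [← Real.rpow_one_add' hs.le (by norm_num)]
      norm_num
    have hK : (4 * π / 3) ^ ((1:ℝ)/3) = 1 / (rs s * s ^ ((1:ℝ)/3)) := by
      rw [eq_div_iff (by positivity)]
      rw [div_eq_iff hr.ne'] at hi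
      rw [mul_comm (rs s), ← mul_assoc]; exact hi.symm
    rw [ecpos s hs, e, hK]
    simp only [Function.comp]
    field_simp
    rfl
  refine ⟨⟨ec0, fun t ht => (hder t ht).continuousWithinAt, vc, vc0, ?_, hder, ?_⟩, ?_, ?_⟩
  · intro t ht
    rcases (Set.mem_Ici.1 ht).eq_or_lt with h | h
    · subst h
      rw [← continuousWithinAt_Ioi_iff_Ici]
      unfold ContinuousWithinAt
      rw [vc0]
      have h := ((pzE_tendsto gam Ac Bc Cc Dc b1 b2 hb1 hb2).sub
        (pzD_tendsto gam Ac Cc Dc b1 b2 hb1 hb2)).comp rs_tendsto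
      rw [sub_zero] at h
      refine h.congr' ?_
      filter_upwards [self_mem_nhdsWithin] with s hs
      rw [vcpos s hs]; rfl
    · apply ContinuousAt.continuousWithinAt
      have hr := rs_pos h
      have cD : ContinuousAt D (rs t) :=
        (pzD_cont gam Ac Cc Dc b1 b2 hb1 hb2 hm2).continuousAt (Ioi_mem_nhds hr)
      have cE : ContinuousAt E (rs t) := (hdE _ hr).continuousAt
      have cr := (rs_hasDerivAt h).continuousAt
      have c : ContinuousAt (fun t => E (rs t) - rs t / 3 * D (rs t)) t :=
        (ContinuousAt.comp (f := rs) cE cr).sub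
          ((cr.div_const 3).mul (ContinuousAt.comp (f := rs) cD cr))
      refine c.congr ?_
      filter_upwards [lt_mem_nhds h] with s hs
      rw [vcpos s hs]
  · have hK : 0 < (4 * π / 3) ^ ((1:ℝ)/3) := by positivity
    set K := (4 * π / 3) ^ ((1:ℝ)/3)
    have hg : 0 < |gam| := abs_pos.2 hgam.ne
    refine ⟨2 * (|gam| + |Ac| + |Bc| + |Cc| + |Dc|) * (1 + K), by positivity, ?_⟩
    intro t ht
    rcases ht.lt_or_eq with h | h
    · rw [vcpos t h]
      refine (pz_bound gam Ac Bc Cc Dc b1 b2 hb1 hb2 _ (rs_pos h)).trans ?_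
      rw [rs_inv h, mul_assoc _ (1 + K)]
      have hp : 0 ≤ t ^ ((1:ℝ)/3) := by positivity
      gcongr
      nlinarith
    · rw [← h, vc0, abs_zero]
      positivity
  · exact ((continuous_coe_real_ereal.tendsto _).comp hlim3).limsup_eq
  · apply div_neg_of_neg_of_pos _ hb2
    exact mul_neg_of_pos_of_neg (by positivity) hgam
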